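/- Two connected finite graphs G and H are CR-similar if and only if their universal covers U_G and U_H are isomorphic. -/

import Mathlib

/-- The type of colors at round `r` of color refinement. -/
def CType : ℕ → Type
  | 0 => Unit
  | r + 1 => Multiset (CType r)

/-- The color of vertex `x` after `r` rounds of color refinement on `G`. -/
noncomputable def crColor {V : Type*} [Fintype V] (G : SimpleGraph V) :
    (r : ℕ) → V → CType r
  | 0, _ => ()
  | r + 1, x => ((G.neighborSet x).toFinite.toFinset).val.map (crColor G r)

/-- The full color-refinement color sequence of a vertex. -/
noncomputable def crSeq {V : Type*} [Fintype V] (G : SimpleGraph V) (x : V) :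
    (r : ℕ) → CType r :=
  fun r => crColor G r x

/-- The set of full color sequences arising at vertices of `G`. -/
noncomputable def crSet {V : Type*} [Fintype V] (G : SimpleGraph V) :
    Set ((r : ℕ) → CType r) :=
  Set.range (crSeq G)

/-- `l` is a non-backtracking walk in `G` starting at `x`. -/
def IsNBWalk {V : Type*} (G : SimpleGraph V) (x : V) (l : List V) : Prop :=
  l ≠ [] ∧ l.head? = some x ∧ l.Chain' G.Adj ∧
    ∀ i : ℕ, (h : i + 2 < l.length) → l[i]'(by omega) ≠ l[i + 2]'h

/-- Vertices of the universal cover of `G` based at `x`: all non-backtracking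
walks starting at `x`. -/
def Cover {V : Type*} (G : SimpleGraph V) (x : V) : Type _ :=
  {l : List V // IsNBWalk G x l}

/-- The universal cover `U_G` (based at `x`) as a graph: a walk is adjacent to
each of its one-step extensions. -/
def coverGraph {V : Type*} (G : SimpleGraph V) (x : V) : SimpleGraph (Cover G x) :=
  SimpleGraph.fromRel (fun a b => ∃ v : V, b.1 = a.1 ++ [v])

open Finset in
theorem map_val_eq_iff_exists_equiv {α β γ : Type*} (s : Finset α) (t : Finset β)
    (f : α → γ) (g : β → γ) :
    s.val.map f = t.val.map g ↔ ∃ e : s ≃ t, ∀ i : s, f i = g (e i) := by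
  classical
  constructor
  · intro h
    have key : ∀ c, Nonempty ({a : s // f a = c} ≃ {b : t // g b = c}) := by
      intro c
      have hc := congrArg (Multiset.count c) h
      rw [Multiset.count_map, Multiset.count_map] at hc
      refine ⟨Fintype.equivOfCardEq ?_⟩
      have hs : Fintype.card {a : s // f a = c} = (s.filter fun a => c = f a).card := by
        rw [← Fintype.card_coe]
        exact Fintype.card_congr
          { toFun := fun a => ⟨a.1.1, by simp [a.2]⟩
            invFun := fun a => ⟨⟨a.1, (mem_filter.1 a.2).1⟩, (mem_filter.1 a.2).2.symm⟩
            left_inv := fun _ => rfl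
            right_inv := fun _ => rfl }
      have ht : Fintype.card {b : t // g b = c} = (t.filter fun b => c = g b).card := by
        rw [← Fintype.card_coe]
        exact Fintype.card_congr
          { toFun := fun a => ⟨a.1.1, by simp [a.2]⟩
            invFun := fun a => ⟨⟨a.1, (mem_filter.1 a.2).1⟩, (mem_filter.1 a.2).2.symm⟩
            left_inv := fun _ => rfl
            right_inv := fun _ => rfl }
      rw [hs, ht]
      exact hc
    exact ⟨Equiv.ofFiberEquiv fun c => (key c).some,
      fun i => (Equiv.ofFiberEquiv_map (g := fun b : t => g b) (fun c => (key c).some) i).symm⟩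
  · rintro ⟨e, he⟩
    have hs : s.val.map f = (univ : Finset s).val.map (fun a : s => f a) := by
      conv_lhs => rw [← Finset.attach_map_val (s := s)]
      simp
    have ht : t.val.map g = (univ : Finset t).val.map (fun a : t => g a) := by
      conv_lhs => rw [← Finset.attach_map_val (s := t)]
      simp
    rw [hs, ht, ← Multiset.map_univ_val_equiv e, Multiset.map_map]
    exact Multiset.map_congr rfl fun i _ => he i

section ColorRefinement

variable {V W : Type*} [Fintype V] [Fintype W] {G : SimpleGraph V} {H : SimpleGraph W}

theorem crColor_succ_eq_iff {r : ℕ} {a : V} {b : W} :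
    crColor G (r + 1) a = crColor H (r + 1) b ↔
      ∃ e : G.neighborSet a ≃ H.neighborSet b,
        ∀ i : G.neighborSet a, crColor G r i = crColor H r (e i) := by
  refine (map_val_eq_iff_exists_equiv _ _ _ _).trans ?_
  let eG : (G.neighborSet a).toFinite.toFinset ≃ G.neighborSet a :=
    Equiv.subtypeEquivRight fun v => by simp
  let eH : (H.neighborSet b).toFinite.toFinset ≃ H.neighborSet b :=
    Equiv.subtypeEquivRight fun v => by simp
  constructor
  · rintro ⟨e, he⟩
    exact ⟨(eG.symm.trans e).trans eH, fun i => he (eG.symm i)⟩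
  · rintro ⟨e, he⟩
    exact ⟨(eG.trans e).trans eH.symm, fun i => he (eG i)⟩

theorem crColor_eq_of_succ {r : ℕ} {a : V} {b : W}
    (h : crColor G (r + 1) a = crColor H (r + 1) b) : crColor G r a = crColor H r b := by
  induction r generalizing a b with
  | zero => rfl
  | succ r ih =>
    obtain ⟨e, he⟩ := crColor_succ_eq_iff.1 h
    exact crColor_succ_eq_iff.2 ⟨e, fun i => ih (he i)⟩

theorem crColor_eq_of_le {r s : ℕ} (hrs : r ≤ s) {a : V} {b : W}
    (h : crColor G s a = crColor H s b) : crColor G r a = crColor H r b := by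
  induction s, hrs using Nat.le_induction with
  | base => exact h
  | succ s _ ih => exact ih (crColor_eq_of_succ h)

/-- Vertices with equal color sequences have neighborhoods that match up in a way preserving
color sequences. -/
theorem exists_equiv_of_crSeq_eq {a : V} {b : W} (h : crSeq G a = crSeq H b) :
    ∃ e : G.neighborSet a ≃ H.neighborSet b,
      ∀ i : G.neighborSet a, crSeq G i.1 = crSeq H (e i).1 := by
  by_contra! hcon
  have hbad : ∀ e : G.neighborSet a ≃ H.neighborSet b, ∃ r, ∃ i : G.neighborSet a,
      crColor G r i.1 ≠ crColor H r (e i).1 := by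
    intro e
    obtain ⟨i, hi⟩ := hcon e
    obtain ⟨r, hr⟩ := Function.ne_iff.1 hi
    exact ⟨r, i, hr⟩
  choose r i hr using hbad
  obtain ⟨R, hR⟩ := (Set.finite_range r).bddAbove
  obtain ⟨e, he⟩ := crColor_succ_eq_iff.1 (congrFun h (R + 1))
  exact hr e (crColor_eq_of_le (hR ⟨e, rfl⟩) (he _))

/-- The matching of neighborhoods can be chosen to respect a prescribed pair of neighbors. -/
theorem exists_equiv_of_crSeq_eq_apply {a : V} {b : W} (h : crSeq G a = crSeq H b)
    (p : G.neighborSet a) (q : H.neighborSet b) (hpq : crSeq G p.1 = crSeq H q.1) :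
    ∃ e : G.neighborSet a ≃ H.neighborSet b,
      e p = q ∧ ∀ i : G.neighborSet a, crSeq G i.1 = crSeq H (e i).1 := by
  classical
  obtain ⟨e, he⟩ := exists_equiv_of_crSeq_eq h
  refine ⟨e.trans (Equiv.swap (e p) q), by simp, fun i => ?_⟩
  rw [Equiv.trans_apply, Equiv.swap_apply_def]
  split_ifs with h1 h2
  · rw [e.injective h1, hpq]
  · rw [he i, h2, ← he p, hpq]
  · exact he i

end ColorRefinement

section UniversalCover

variable {V W : Type*} {G : SimpleGraph V} {H : SimpleGraph W}

/-- `a :: t` is a non-backtracking walk whose first step does not lead to `p`. -/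
def NBTail (G : SimpleGraph V) : V → V → List V → Prop
  | _, _, [] => True
  | p, a, v :: t => G.Adj a v ∧ v ≠ p ∧ NBTail G a v t

/-- The last two entries of `p :: a :: t`. -/
def lastPair : V → V → List V → V × V
  | p, a, [] => (p, a)
  | _, a, v :: t => lastPair a v t

theorem nbTail_iff {p a : V} {t : List V} :
    NBTail G p a t ↔ (a :: t).IsChain G.Adj ∧ t.head? ≠ some p ∧
      ∀ i : ℕ, (h : i + 2 < (a :: t).length) → (a :: t)[i]'(by omega) ≠ (a :: t)[i + 2]'h := by
  induction t generalizing p a with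
  | nil => simp [NBTail]
  | cons v t ih =>
    rw [NBTail, ih, List.isChain_cons_cons]
    constructor
    · rintro ⟨h1, h2, h3, h4, h5⟩
      refine ⟨⟨h1, h3⟩, by simpa using h2, fun i hi => ?_⟩
      cases i with
      | zero =>
        cases t with
        | nil => simp at hi
        | cons w t => simpa [eq_comm] using h4
      | succ i => exact h5 i (by simpa using hi)
    · rintro ⟨⟨h1, h3⟩, h2, h5⟩
      refine ⟨h1, by simpa using h2, h3, ?_, fun i hi => h5 (i + 1) (by simpa using hi)⟩
      cases t with
      | nil => simp
      | cons w t => simpa [eq_comm] using h5 0 (by simp)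

theorem isNBWalk_iff {x : V} {l : List V} :
    IsNBWalk G x l ↔ ∃ t, l = x :: t ∧ NBTail G x x t := by
  constructor
  · rintro ⟨h1, h2, h3, h4⟩
    cases l with
    | nil => exact absurd rfl h1
    | cons a t =>
      obtain rfl : a = x := by simpa using h2
      have h3 : (a :: t).IsChain G.Adj := h3
      refine ⟨t, rfl, nbTail_iff.2 ⟨h3, ?_, h4⟩⟩
      cases t with
      | nil => simp
      | cons v t => simpa using (List.isChain_cons_cons.1 h3).1.ne'
  · rintro ⟨t, rfl, ht⟩
    obtain ⟨h1, -, h3⟩ := nbTail_iff.1 ht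
    exact ⟨by simp, by simp, h1, h3⟩

theorem lastPair_append_singleton (p a v : V) (t : List V) :
    lastPair p a (t ++ [v]) = ((lastPair p a t).2, v) := by
  induction t generalizing p a with
  | nil => rfl
  | cons w t ih => exact ih a w

theorem nbTail_append_singleton {p a v : V} {t : List V} :
    NBTail G p a (t ++ [v]) ↔
      NBTail G p a t ∧ G.Adj (lastPair p a t).2 v ∧ v ≠ (lastPair p a t).1 := by
  induction t generalizing p a with
  | nil => simp [NBTail, lastPair]
  | cons w t ih => simp [NBTail, lastPair, ih, and_assoc]

theorem coverGraph_adj {x : V} {a b : Cover G x} :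
    (coverGraph G x).Adj a b ↔ (∃ v, b.1 = a.1 ++ [v]) ∨ ∃ v, a.1 = b.1 ++ [v] := by
  rw [coverGraph, SimpleGraph.fromRel_adj, and_iff_right_iff_imp]
  rintro (⟨v, h⟩ | ⟨v, h⟩) rfl <;> simp at h

/-- The walk `x :: t` as a vertex of the universal cover. -/
def Cover.mk (x : V) (t : List V) (ht : NBTail G x x t) : Cover G x :=
  ⟨x :: t, isNBWalk_iff.2 ⟨t, rfl, ht⟩⟩

theorem Cover.exists_eq_mk {x : V} (u : Cover G x) : ∃ t ht, u = Cover.mk x t ht := by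
  obtain ⟨l, hl⟩ := u
  obtain ⟨t, rfl, ht⟩ := isNBWalk_iff.1 hl
  exact ⟨t, ht, rfl⟩

theorem Cover.mk_adj {x : V} {s t : List V} {hs : NBTail G x x s} {ht : NBTail G x x t} :
    (coverGraph G x).Adj (Cover.mk x s hs) (Cover.mk x t ht) ↔
      (∃ v, t = s ++ [v]) ∨ ∃ v, s = t ++ [v] :=
  coverGraph_adj.trans (by simp [Cover.mk])

/-- The covering projection, sending a walk to its endpoint. -/
def Cover.proj {x : V} (u : Cover G x) : V := (lastPair x x u.1.tail).2

@[simp]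
theorem Cover.proj_mk {x : V} {t : List V} (ht : NBTail G x x t) :
    (Cover.mk x t ht).proj = (lastPair x x t).2 := rfl

theorem Cover.adj_proj {x : V} {u w : Cover G x} (h : (coverGraph G x).Adj u w) :
    G.Adj u.proj w.proj := by
  obtain ⟨s, hs, rfl⟩ := u.exists_eq_mk
  obtain ⟨t, ht, rfl⟩ := w.exists_eq_mk
  rcases Cover.mk_adj.1 h with ⟨v, rfl⟩ | ⟨v, rfl⟩
  · simpa [lastPair_append_singleton] using (nbTail_append_singleton.1 ht).2.1
  · simpa [lastPair_append_singleton] using (nbTail_append_singleton.1 hs).2.1.symm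

/-- The covering projection is locally injective. -/
theorem Cover.proj_injOn_neighborSet {x : V} (u : Cover G x) :
    Set.InjOn Cover.proj ((coverGraph G x).neighborSet u) := by
  intro a ha b hb hab
  rw [SimpleGraph.mem_neighborSet] at ha hb
  obtain ⟨s, hs, rfl⟩ := u.exists_eq_mk
  obtain ⟨t, ht, rfl⟩ := a.exists_eq_mk
  obtain ⟨r, hr, rfl⟩ := b.exists_eq_mk
  rw [Cover.proj_mk, Cover.proj_mk] at hab
  rcases Cover.mk_adj.1 ha with ⟨v, rfl⟩ | ⟨v, rfl⟩ <;>
    rcases Cover.mk_adj.1 hb with ⟨w, hw⟩ | ⟨w, hw⟩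
  · subst hw
    simp only [lastPair_append_singleton] at hab
    subst hab
    rfl
  · subst hw
    have := (nbTail_append_singleton.1 ht).2.2
    simp only [lastPair_append_singleton] at this hab
    exact absurd hab this
  · subst hw
    have := (nbTail_append_singleton.1 hr).2.2
    simp only [lastPair_append_singleton] at this hab
    exact absurd hab.symm this
  · obtain ⟨rfl, -⟩ := List.append_inj' hw rfl
    rfl

/-- The covering projection is locally surjective. -/
theorem Cover.exists_adj_proj_eq {x : V} (u : Cover G x) {w : V} (h : G.Adj u.proj w) :
    ∃ b, (coverGraph G x).Adj u b ∧ b.proj = w := by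
  obtain ⟨s, hs, rfl⟩ := u.exists_eq_mk
  rw [Cover.proj_mk] at h
  by_cases hw : w = (lastPair x x s).1
  · rcases List.eq_nil_or_concat' s with rfl | ⟨t, v, rfl⟩
    · exact absurd hw h.ne'
    · refine ⟨Cover.mk x t (nbTail_append_singleton.1 hs).1, Cover.mk_adj.2 (.inr ⟨v, rfl⟩), ?_⟩
      simp [hw, lastPair_append_singleton]
  · refine ⟨Cover.mk x (s ++ [w]) (nbTail_append_singleton.2 ⟨hs, h, hw⟩),
      Cover.mk_adj.2 (.inl ⟨w, rfl⟩), ?_⟩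
    simp [lastPair_append_singleton]

theorem Cover.proj_surjective (hG : G.Connected) (x : V) :
    Function.Surjective (Cover.proj : Cover G x → V) := by
  intro v
  obtain ⟨p⟩ := hG.preconnected v x
  induction p with
  | nil => exact ⟨Cover.mk _ [] trivial, rfl⟩
  | cons h _ ih =>
    obtain ⟨u, rfl⟩ := ih
    obtain ⟨b, -, hb⟩ := u.exists_adj_proj_eq h.symm
    exact ⟨b, hb⟩

/-- The bijection between the neighbors of a vertex of the cover and those of its projection. -/
noncomputable def Cover.neighborEquiv {x : V} (u : Cover G x) :
    (coverGraph G x).neighborSet u ≃ G.neighborSet u.proj :=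
  Equiv.ofBijective (fun b => ⟨b.1.proj, Cover.adj_proj b.2⟩)
    ⟨fun a b h => Subtype.ext (u.proj_injOn_neighborSet a.2 b.2 (congrArg Subtype.val h)),
      fun w => by
        obtain ⟨b, hb, hbw⟩ := u.exists_adj_proj_eq w.2
        exact ⟨⟨b, hb⟩, Subtype.ext hbw⟩⟩

theorem Cover.coe_neighborEquiv {x : V} (u : Cover G x)
    (b : (coverGraph G x).neighborSet u) : (u.neighborEquiv b : V) = b.1.proj := rfl

theorem crColor_proj_eq_of_iso [Fintype V] [Fintype W] {x : V} {y : W}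
    (φ : coverGraph G x ≃g coverGraph H y) (r : ℕ) (u : Cover G x) :
    crColor G r u.proj = crColor H r (φ u).proj := by
  induction r generalizing u with
  | zero => rfl
  | succ r ih =>
    refine crColor_succ_eq_iff.2 ⟨(u.neighborEquiv.symm.trans (φ.mapNeighborSet u)).trans
      (φ u).neighborEquiv, fun i => ?_⟩
    obtain ⟨b, rfl⟩ := u.neighborEquiv.surjective i
    simp only [Equiv.trans_apply, Equiv.symm_apply_apply, Cover.coe_neighborEquiv]
    exact ih b.1

theorem crSet_subset_of_iso [Fintype V] [Fintype W] (hG : G.Connected) {x : V} {y : W}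
    (φ : coverGraph G x ≃g coverGraph H y) : crSet G ⊆ crSet H := by
  rintro _ ⟨v, rfl⟩
  obtain ⟨u, rfl⟩ := Cover.proj_surjective hG x v
  exact ⟨(φ u).proj, funext fun r => (crColor_proj_eq_of_iso φ r u).symm⟩

/-- Mutually inverse adjacency-preserving maps form an isomorphism. -/
def isoOfInverseHoms {A B : Type*} {S : SimpleGraph A} {T : SimpleGraph B} (f : A → B) (g : B → A)
    (hgf : ∀ a, g (f a) = a) (hfg : ∀ b, f (g b) = b)
    (hf : ∀ a a', S.Adj a a' → T.Adj (f a) (f a'))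
    (hg : ∀ b b', T.Adj b b' → S.Adj (g b) (g b')) : S ≃g T where
  toFun := f
  invFun := g
  left_inv := hgf
  right_inv := hfg
  map_rel_iff' {a a'} := ⟨fun h => by simpa [hgf] using hg _ _ h, hf a a'⟩

/-- Reroot a walk starting at a neighbor of `z` at `z`, cancelling backtracking. -/
noncomputable def reroot (z : V) (l : List V) : List V :=
  open Classical in if l.tail.head? = some z then l.tail else z :: l

theorem IsNBWalk.reroot {y z : V} (h : G.Adj y z) {l : List V} (hl : IsNBWalk G y l) :
    IsNBWalk G z (reroot z l) := by
  obtain ⟨t, rfl, ht⟩ := isNBWalk_iff.1 hl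
  refine isNBWalk_iff.2 ?_
  rcases t with _ | ⟨v, t⟩
  · exact ⟨[y], by simp [_root_.reroot], h.symm, h.ne, trivial⟩
  · obtain ⟨h1, h2, h3⟩ := ht
    by_cases hv : v = z
    · subst hv
      refine ⟨t, by simp [_root_.reroot], ?_⟩
      rcases t with _ | ⟨w, t⟩
      · trivial
      · exact ⟨h3.1, h3.1.ne', h3.2.2⟩
    · exact ⟨y :: v :: t, by simp [_root_.reroot, hv], h.symm, h.ne, h1, hv, h3⟩

theorem reroot_reroot {y z : V} {l : List V} (hl : IsNBWalk G y l) :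
    reroot y (reroot z l) = l := by
  obtain ⟨t, rfl, ht⟩ := isNBWalk_iff.1 hl
  rcases t with _ | ⟨v, t⟩
  · simp [reroot]
  · by_cases hv : v = z
    · subst hv
      rcases t with _ | ⟨w, t⟩
      · simp [reroot]
      · have := ht.2.2.2.1
        simp [reroot, this]
    · simp [reroot, hv]

theorem reroot_append_singleton {y z : V} (v : V) (t : List V) :
    (∃ w, reroot z (y :: t ++ [v]) = reroot z (y :: t) ++ [w]) ∨
      ∃ w, reroot z (y :: t) = reroot z (y :: t ++ [v]) ++ [w] := by
  rcases t with _ | ⟨w, t⟩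
  · by_cases hv : v = z
    · subst hv
      exact .inr ⟨y, by simp [reroot]⟩
    · exact .inl ⟨v, by simp [reroot, hv]⟩
  · refine .inl ⟨v, ?_⟩
    by_cases hw : w = z <;> simp [reroot, hw]

theorem reroot_adj {y z : V} (h : G.Adj y z) {a b : Cover G y} (hab : (coverGraph G y).Adj a b) :
    (coverGraph G z).Adj ⟨reroot z a.1, a.2.reroot h⟩ ⟨reroot z b.1, b.2.reroot h⟩ := by
  obtain ⟨s, hs, rfl⟩ := a.exists_eq_mk
  obtain ⟨t, ht, rfl⟩ := b.exists_eq_mk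
  refine coverGraph_adj.2 ?_
  rcases Cover.mk_adj.1 hab with ⟨v, rfl⟩ | ⟨v, rfl⟩
  · exact reroot_append_singleton v s
  · exact (reroot_append_singleton v t).symm

/-- The universal cover does not depend on the base vertex. -/
theorem nonempty_coverGraph_iso (hG : G.Connected) (x y : V) :
    Nonempty (coverGraph G x ≃g coverGraph G y) := by
  obtain ⟨p⟩ := hG.preconnected x y
  induction p with
  | nil => exact ⟨.refl⟩
  | cons h _ ih =>
    refine ih.map fun φ => SimpleGraph.Iso.comp φ ?_
    exact isoOfInverseHoms (fun a => ⟨reroot _ a.1, a.2.reroot h⟩)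
      (fun a => ⟨reroot _ a.1, a.2.reroot h.symm⟩)
      (fun a => Subtype.ext (reroot_reroot a.2)) (fun a => Subtype.ext (reroot_reroot a.2))
      (fun _ _ => reroot_adj h) (fun _ _ => reroot_adj h.symm)

/-- Carry a walk from one graph to another step by step, where `φ p q a b` prescribes the images of
the next vertex after the walks' last two vertices `p, a` and `q, b`. -/
def transport (φ : V → W → V → W → V → W) : V → W → V → W → List V → List W
  | _, _, _, _, [] => []
  | p, q, a, b, v :: t => φ p q a b v :: transport φ a b v (φ p q a b v) t

theorem transport_append_singleton (φ : V → W → V → W → V → W) (p : V) (q : W) (a : V) (b : W)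
    (t : List V) (v : V) :
    ∃ w, transport φ p q a b (t ++ [v]) = transport φ p q a b t ++ [w] := by
  induction t generalizing p q a b with
  | nil => exact ⟨_, rfl⟩
  | cons u t ih =>
    obtain ⟨w, hw⟩ := ih a b u (φ p q a b u)
    exact ⟨w, by simp [transport, hw]⟩

theorem NBTail.transport {φ : V → W → V → W → V → W} {ψ : W → V → W → V → W → V}
    {M : V → W → V → W → Prop}
    (hφ : ∀ p q a b, M p q a b → ∀ v, G.Adj a v → v ≠ p →
      H.Adj b (φ p q a b v) ∧ φ p q a b v ≠ q ∧ M a b v (φ p q a b v) ∧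
        ψ q p b a (φ p q a b v) = v)
    {p : V} {q : W} {a : V} {b : W} {t : List V} (hM : M p q a b) (ht : NBTail G p a t) :
    NBTail H q b (transport φ p q a b t) ∧
      _root_.transport ψ q p b a (transport φ p q a b t) = t := by
  induction t generalizing p q a b with
  | nil => exact ⟨trivial, rfl⟩
  | cons v t ih =>
    obtain ⟨h1, h2, h3⟩ := ht
    obtain ⟨k1, k2, k3, k4⟩ := hφ p q a b hM v h1 h2
    obtain ⟨i1, i2⟩ := ih k3 h3
    refine ⟨⟨k1, k2, i1⟩, ?_⟩
    simp only [_root_.transport, k4, i2]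

theorem coverGraph_adj_transport {φ : V → W → V → W → V → W} {x : V} {y : W}
    {s t : List V} {hs : NBTail G x x s} {ht : NBTail G x x t}
    {hs' : NBTail H y y (transport φ x y x y s)} {ht' : NBTail H y y (transport φ x y x y t)}
    (h : (coverGraph G x).Adj (Cover.mk x s hs) (Cover.mk x t ht)) :
    (coverGraph H y).Adj (Cover.mk y _ hs') (Cover.mk y _ ht') := by
  rw [Cover.mk_adj] at h ⊢
  rcases h with ⟨v, rfl⟩ | ⟨v, rfl⟩
  · exact .inl (transport_append_singleton ..)
  · exact .inr (transport_append_singleton ..)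

theorem Cover.nbTail_tail {x : V} (u : Cover G x) : NBTail G x x u.1.tail := by
  obtain ⟨t, ht, rfl⟩ := u.exists_eq_mk
  exact ht

theorem Cover.mk_tail {x : V} (u : Cover G x) : Cover.mk x u.1.tail u.nbTail_tail = u := by
  obtain ⟨t, ht, rfl⟩ := u.exists_eq_mk
  rfl

/-- Compatible systems of local bijections assemble to an isomorphism of universal covers. -/
theorem nonempty_iso_of_transport {φ : V → W → V → W → V → W} {ψ : W → V → W → V → W → V}
    {M : V → W → V → W → Prop}
    (hφ : ∀ p q a b, M p q a b → ∀ v, G.Adj a v → v ≠ p →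
      H.Adj b (φ p q a b v) ∧ φ p q a b v ≠ q ∧ M a b v (φ p q a b v) ∧
        ψ q p b a (φ p q a b v) = v)
    (hψ : ∀ p q a b, M p q a b → ∀ w, H.Adj b w → w ≠ q →
      G.Adj a (ψ q p b a w) ∧ ψ q p b a w ≠ p ∧ M a b (ψ q p b a w) w ∧
        φ p q a b (ψ q p b a w) = w)
    {x : V} {y : W} (hM : M x y x y) : Nonempty (coverGraph G x ≃g coverGraph H y) := by
  have hψ' : ∀ q p b a, (fun q p b a => M p q a b) q p b a → ∀ w, H.Adj b w → w ≠ q →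
      G.Adj a (ψ q p b a w) ∧ ψ q p b a w ≠ p ∧ (fun q p b a => M p q a b) b a w (ψ q p b a w) ∧
        φ p q a b (ψ q p b a w) = w := fun q p b a => hψ p q a b
  refine ⟨isoOfInverseHoms
    (fun u => Cover.mk y _ (NBTail.transport hφ hM u.nbTail_tail).1)
    (fun u => Cover.mk x _ (NBTail.transport hψ' hM u.nbTail_tail).1) ?_ ?_ ?_ ?_⟩
  · intro u
    exact Subtype.ext ((congrArg (x :: ·) (NBTail.transport hφ hM u.nbTail_tail).2).trans
      (congrArg Subtype.val u.mk_tail))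
  · intro u
    exact Subtype.ext ((congrArg (y :: ·) (NBTail.transport hψ' hM u.nbTail_tail).2).trans
      (congrArg Subtype.val u.mk_tail))
  · intro u w h
    rw [← u.mk_tail, ← w.mk_tail] at h
    exact coverGraph_adj_transport h
  · intro u w h
    rw [← u.mk_tail, ← w.mk_tail] at h
    exact coverGraph_adj_transport h

variable [Fintype V] [Fintype W]

/-- The pairs `(p, a)` and `(q, b)` have the same color sequences, and are either both edges or
both constant. -/
def Matched (G : SimpleGraph V) (H : SimpleGraph W) (p : V) (q : W) (a : V) (b : W) : Prop :=
  crSeq G p = crSeq H q ∧ crSeq G a = crSeq H b ∧ ((G.Adj a p ∧ H.Adj b q) ∨ (p = a ∧ q = b))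

theorem Matched.exists_equiv {p : V} {q : W} {a : V} {b : W} (h : Matched G H p q a b) :
    ∃ e : G.neighborSet a ≃ H.neighborSet b, (∀ i, i.1 = p ↔ (e i).1 = q) ∧
      ∀ i : G.neighborSet a, crSeq G i.1 = crSeq H (e i).1 := by
  obtain ⟨hpq, hab, ⟨hp, hq⟩ | ⟨rfl, rfl⟩⟩ := h
  · obtain ⟨e, he, hcol⟩ := exists_equiv_of_crSeq_eq_apply hab ⟨p, hp⟩ ⟨q, hq⟩ hpq
    refine ⟨e, fun i => ?_, hcol⟩
    have := e.injective.eq_iff (a := i) (b := ⟨p, hp⟩)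
    rw [he, Subtype.ext_iff, Subtype.ext_iff] at this
    exact this.symm
  · obtain ⟨e, hcol⟩ := exists_equiv_of_crSeq_eq hab
    exact ⟨e, fun i => iff_of_false i.2.ne' (e i).2.ne', hcol⟩

theorem Matched.exists_maps {p : V} {q : W} {a : V} {b : W} (h : Matched G H p q a b) :
    ∃ (φ : V → W) (ψ : W → V),
      (∀ v, G.Adj a v → v ≠ p → H.Adj b (φ v) ∧ φ v ≠ q ∧ Matched G H a b v (φ v) ∧
        ψ (φ v) = v) ∧
      (∀ w, H.Adj b w → w ≠ q → G.Adj a (ψ w) ∧ ψ w ≠ p ∧ Matched G H a b (ψ w) w ∧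
        φ (ψ w) = w) := by
  classical
  obtain ⟨e, he, hcol⟩ := h.exists_equiv
  refine ⟨fun v => if hv : G.Adj a v then (e ⟨v, hv⟩).1 else b,
    fun w => if hw : H.Adj b w then (e.symm ⟨w, hw⟩).1 else a, fun v hv hvp => ?_,
    fun w hw hwq => ?_⟩
  · have hb : H.Adj b (e ⟨v, hv⟩).1 := (e ⟨v, hv⟩).2
    simp only [hv, hb, dif_pos]
    exact ⟨trivial, fun hq => hvp ((he ⟨v, hv⟩).2 hq),
      ⟨h.2.1, hcol ⟨v, hv⟩, .inl ⟨hv.symm, hb.symm⟩⟩, by simp⟩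
  · have ha : G.Adj a (e.symm ⟨w, hw⟩).1 := (e.symm ⟨w, hw⟩).2
    simp only [hw, ha, dif_pos]
    exact ⟨trivial, fun hp => hwq (by simpa using (he (e.symm ⟨w, hw⟩)).1 hp),
      ⟨h.2.1, by simpa using hcol (e.symm ⟨w, hw⟩), .inl ⟨ha.symm, hw.symm⟩⟩, by simp⟩

theorem nonempty_iso_of_crSeq_eq {x : V} {y : W} (h : crSeq G x = crSeq H y) :
    Nonempty (coverGraph G x ≃g coverGraph H y) := by
  have : Nonempty V := ⟨x⟩
  have : Nonempty W := ⟨y⟩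
  have key : ∀ p q a b, Matched G H p q a b → _ := fun p q a b => Matched.exists_maps
  choose! φ ψ hφ hψ using key
  exact nonempty_iso_of_transport (M := Matched G H) (φ := φ) (ψ := fun q p b a => ψ p q a b)
    hφ hψ ⟨h, h, .inr ⟨rfl, rfl⟩⟩

end UniversalCover

/-- Two connected finite graphs are CR-similar iff their universal covers are
isomorphic (the universal cover being independent of the base vertex, the base
vertices `x` and `y` are arbitrary). -/
theorem stmt_8 {VG VH : Type*} [Fintype VG] [Fintype VH]
    (G : SimpleGraph VG) (H : SimpleGraph VH)
    (hG : G.Connected) (hH : H.Connected) (x : VG) (y : VH) :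
    crSet G = crSet H ↔ Nonempty (coverGraph G x ≃g coverGraph H y) := by
  constructor
  · intro h
    obtain ⟨z, hz⟩ : crSeq G x ∈ crSet H := h ▸ ⟨x, rfl⟩
    obtain ⟨φ⟩ := nonempty_iso_of_crSeq_eq hz.symm
    obtain ⟨ψ⟩ := nonempty_coverGraph_iso hH z y
    exact ⟨ψ.comp φ⟩
  · rintro ⟨φ⟩
    exact (crSet_subset_of_iso hG φ).antisymm (crSet_subset_of_iso hH φ.symm)
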